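/- arXiv:2501.00938 — 5 statements merged into one kernel-verified Lean document; each statement's English description precedes it below -/
import Mathlib

section
/- Let ℓ ≥ 1 be an integer and let a ∈ ℂ with a ≠ 1. Then the vector z ∈ ℂ^ℓ with entries z_j = a·a^{j−1}/(a−1)² − j/(a−1) + (1/(a−1))·(1 + ℓ − a^{ℓ+1}/(a−1)) for j = 1, …, ℓ satisfies B₀ z = D𝟙, where D𝟙 is the vector with entries (D𝟙)_j = a^{j−1}; and the first entry of z equals (ℓ(a−1) + a(1 − a^ℓ))/(a−1)². -/
open Matrix

/-- The ℓ×ℓ complex tridiagonal matrix B₀ with (B₀)₁₁ = −1, other diagonal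
entries −2, and super/sub-diagonal entries 1. -/
def B0C (ℓ : ℕ) : Matrix (Fin ℓ) (Fin ℓ) ℂ := fun i j =>
  if i = j then (if (i : ℕ) = 0 then -1 else -2)
  else if (i : ℕ) + 1 = (j : ℕ) ∨ (j : ℕ) + 1 = (i : ℕ) then 1 else 0

theorem B0_solve_D_ones (ℓ : ℕ) (hℓ : 0 < ℓ) (a : ℂ) (ha : a ≠ 1)
    (z : Fin ℓ → ℂ)
    (hz : ∀ j : Fin ℓ,
      z j = a * a ^ (j : ℕ) / (a - 1) ^ 2 - ((j : ℕ) + 1 : ℂ) / (a - 1)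
              + (1 / (a - 1)) * (1 + ℓ - a ^ (ℓ + 1) / (a - 1))) :
    (B0C ℓ).mulVec z = (fun j : Fin ℓ => a ^ (j : ℕ)) ∧
    z ⟨0, hℓ⟩ = (ℓ * (a - 1) + a * (1 - a ^ ℓ)) / (a - 1) ^ 2 := by
  have h1 : a - 1 ≠ 0 := sub_ne_zero.mpr ha
  refine ⟨?_, ?_⟩
  · obtain ⟨f, hf⟩ : ∃ f : ℕ → ℂ, ∀ j, f j = a * a ^ j / (a - 1) ^ 2 - ((j : ℂ) + 1) / (a - 1)
              + (1 / (a - 1)) * (1 + ℓ - a ^ (ℓ + 1) / (a - 1)) := ⟨_, fun _ => rfl⟩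
    have hfl : f ℓ = 0 := by
      rw [hf]; field_simp; ring
    have hzf : ∀ j : Fin ℓ, z j = f j := fun j => by rw [hz, hf]
    funext i
    obtain ⟨i, hi⟩ := i
    have key : (B0C ℓ).mulVec z ⟨i, hi⟩ = ∑ j ∈ Finset.range (ℓ + 1),
        (if i = j then (if i = 0 then -1 else -2)
          else if i + 1 = j ∨ j + 1 = i then 1 else 0) * f j := by
      rw [Finset.sum_range_succ, hfl, mul_zero, add_zero, Finset.sum_range]
      simp only [Matrix.mulVec, dotProduct, B0C, hzf, Fin.mk.injEq, Fin.ext_iff]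
    rw [key]
    rcases i with _ | k
    · have : ∀ j ∈ Finset.range (ℓ + 1), ((if 0 = j then (if (0:ℕ) = 0 then -1 else -2)
          else if 0 + 1 = j ∨ j + 1 = 0 then 1 else 0) * f j : ℂ)
          = (if 0 = j then - f j else 0) + (if 1 = j then f j else 0) := by
        intro j _
        rcases j with _ | _ | j <;> simp
      rw [Finset.sum_congr rfl this, Finset.sum_add_distrib, Finset.sum_ite_eq,
        Finset.sum_ite_eq, if_pos (by simp), if_pos (by simp; omega), hf, hf]
      push_cast
      field_simp
      ring
    · have : ∀ j ∈ Finset.range (ℓ + 1), ((if k + 1 = j then (if k + 1 = 0 then -1 else -2)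
          else if k + 1 + 1 = j ∨ j + 1 = k + 1 then 1 else 0) * f j : ℂ)
          = (if k + 1 = j then - 2 * f j else 0) + (if k + 2 = j then f j else 0)
            + (if k = j then f j else 0) := by
        intro j _
        by_cases e1 : j = k + 1
        · subst e1; simp
        by_cases e2 : j = k + 2
        · subst e2; simp
        by_cases e3 : j = k
        · subst e3; simp
        simp [Ne.symm e1, Ne.symm e2, Ne.symm e3, e3]
      rw [Finset.sum_congr rfl this, Finset.sum_add_distrib, Finset.sum_add_distrib,
        Finset.sum_ite_eq, Finset.sum_ite_eq, Finset.sum_ite_eq, if_pos (by simp; omega),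
        if_pos (by simp; omega), if_pos (by simp; omega), hf, hf, hf]
      push_cast
      field_simp
      ring
  · rw [hz]
    push_cast
    field_simp
    ring
end

section
/- Let ℓ ≥ 1 be an integer, let ω₁ ∈ ℝ, and set a = exp(i ω₁) and f = −1 + a⁻¹. Then 1 − ℓ·f ≠ 0, and the vector β₀ ∈ ℂ^ℓ with entries (β₀)_j = (a^ℓ / (1 − ℓ·f)) · ((1 + f) − f·j) for j = 1, …, ℓ satisfies (B₀ + f·e₁·e₁ᵀ) β₀ = −a^ℓ · e_ℓ, and its first entry is (β₀)₁ = a^ℓ / (1 + ℓ − ℓ·a⁻¹). -/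
open Matrix Complex

/-- The first standard basis vector e₁ of ℂ^ℓ. -/
def e1 (ℓ : ℕ) : Fin ℓ → ℂ := fun j => if (j : ℕ) = 0 then 1 else 0

/-- The last standard basis vector e_ℓ of ℂ^ℓ. -/
def eL (ℓ : ℕ) : Fin ℓ → ℂ := fun j => if (j : ℕ) = ℓ - 1 then 1 else 0

theorem fd_ellx1_zeroth_order (ℓ : ℕ) (hℓ : 0 < ℓ) (ω₁ : ℝ) (a f : ℂ)
    (ha : a = Complex.exp (Complex.I * ω₁)) (hf : f = -1 + a⁻¹)
    (β₀ : Fin ℓ → ℂ)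
    (hβ₀ : ∀ j : Fin ℓ,
      β₀ j = (a ^ ℓ / (1 - ℓ * f)) * ((1 + f) - f * ((j : ℕ) + 1 : ℂ))) :
    1 - ℓ * f ≠ 0 ∧
    (B0C ℓ + f • Matrix.vecMulVec (e1 ℓ) (e1 ℓ)).mulVec β₀ = (-(a ^ ℓ)) • eL ℓ ∧
    β₀ ⟨0, hℓ⟩ = a ^ ℓ / (1 + ℓ - ℓ * a⁻¹) := by
  have hna : ‖a‖ = 1 := by
    rw [ha, mul_comm]; exact Complex.norm_exp_ofReal_mul_I ω₁
  have hne : 1 - ℓ * f ≠ 0 := by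
    intro h
    have h1 : (ℓ : ℂ) * a⁻¹ = ((ℓ + 1 : ℕ) : ℂ) := by
      rw [hf] at h; push_cast; linear_combination -h
    have h2 := congrArg norm h1
    rw [norm_mul, norm_inv, hna, Complex.norm_natCast, Complex.norm_natCast] at h2
    push_cast at h2
    linarith
  refine ⟨hne, ?_, ?_⟩
  · obtain ⟨c, hc⟩ : ∃ c, c = a ^ ℓ / (1 - ℓ * f) := ⟨_, rfl⟩
    have hc' : a ^ ℓ = c * (1 - ℓ * f) := by rw [hc]; field_simp
    rw [hc']
    rw [← hc] at hβ₀
    ext i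
    have hent : ∀ j : Fin ℓ, (B0C ℓ + f • Matrix.vecMulVec (e1 ℓ) (e1 ℓ)) i j * β₀ j =
        (fun k : ℕ => (if (i : ℕ) = k then
            (if (i : ℕ) = 0 then -1 + f else -2) * (c * ((1 + f) - f * ((k : ℂ) + 1))) else 0)
          + (if (i : ℕ) + 1 = k then c * ((1 + f) - f * ((k : ℂ) + 1)) else 0)
          + (if (i : ℕ) = k + 1 then c * ((1 + f) - f * ((k : ℂ) + 1)) else 0)) (j : ℕ) := by
      intro j
      rw [hβ₀ j]
      simp only [Matrix.add_apply, Matrix.smul_apply, Matrix.vecMulVec_apply, B0C, e1, Fin.ext_iff,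
        smul_eq_mul]
      split_ifs <;> first | omega | (exfalso; omega) | ring
    obtain ⟨i, hi⟩ := i
    simp only [Matrix.mulVec, dotProduct]
    refine (Finset.sum_congr rfl (fun j _ => hent j)).trans ?_
    refine (Fin.sum_univ_eq_sum_range (fun k : ℕ => (if i = k then
            (if i = 0 then -1 + f else -2) * (c * ((1 + f) - f * ((k : ℂ) + 1))) else 0)
          + (if i + 1 = k then c * ((1 + f) - f * ((k : ℂ) + 1)) else 0)
          + (if i = k + 1 then c * ((1 + f) - f * ((k : ℂ) + 1)) else 0)) ℓ).trans ?_
    rw [Finset.sum_add_distrib, Finset.sum_add_distrib]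
    simp only [Pi.smul_apply, eL, smul_eq_mul]
    rw [Finset.sum_ite_eq, Finset.sum_ite_eq]
    rcases i with _ | m
    · rw [Finset.sum_eq_zero (fun k _ => if_neg (by omega))]
      by_cases h : ℓ = 1
      · subst h; simp; ring
      · have h1 : 1 < ℓ := by omega
        have h2 : ¬ (0 = ℓ - 1) := by omega
        simp [hℓ, h1, h2]
        ring
    · simp only [Nat.add_right_cancel_iff]
      rw [Finset.sum_ite_eq]
      have hm : m < ℓ := by omega
      by_cases h : ℓ = m + 2
      · subst h; simp; ring
      · have h1 : m + 1 + 1 < ℓ := by omega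
        have h2 : ¬ (m + 1 = ℓ - 1) := by omega
        simp [hi, hm, h1, h2]
        ring
  · rw [hβ₀]
    have : (1 + ℓ - ℓ * a⁻¹ : ℂ) = 1 - ℓ * f := by rw [hf]; ring
    rw [this]
    simp
end

section
/- Let ℓ ≥ 1 be an integer, let ω₁, ω₂ ∈ ℝ, set a = exp(i ω₁), f = −1 + a⁻¹, ŝ₀ = a^ℓ / (1 − ℓ·f), and let β₀ ∈ ℂ^ℓ have entries (β₀)_j = ŝ₀·((1 + f) − f·j). Define ℬ₁ = exp(−i ω₂)·D𝟙·e₁ᵀ − 2·I and b₁ = −exp(i ω₂)·D𝟙. Then every β₁ ∈ ℂ^ℓ satisfying (B₀ + f·e₁·e₁ᵀ) β₁ = b₁ − ℬ₁ β₀ has first entry (β₁)₁ = −a^{−ℓ} · ŝ₀ · [ (1/3)·ℓ(ℓ+1)·(3·a⁻¹ + (1 − a⁻¹)(ℓ + 2))·ŝ₀ + (exp(i ω₂) + ŝ₀·exp(−i ω₂))·z₁(a) ]. -/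
open Matrix Complex

/-- The vector D𝟙 ∈ ℂ^ℓ with entries (D𝟙)_j = a^{j-1}. -/
def D1 (ℓ : ℕ) (a : ℂ) : Fin ℓ → ℂ := fun j => a ^ (j : ℕ)

open Classical in
/-- The first entry z₁(a) of the solution z of B₀ z = D𝟙. -/
noncomputable def z1 (ℓ : ℕ) (a : ℂ) : ℂ :=
  if a = 1 then -((ℓ : ℂ) * (ℓ + 1)) / 2
  else ((ℓ : ℂ) * (a - 1) + a * (1 - a ^ ℓ)) / (a - 1) ^ 2

/-- The test vector w with wᵀ B₀ = -e₁ᵀ. -/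
def wv (ℓ : ℕ) : Fin ℓ → ℂ := fun i => (ℓ : ℂ) - ((i : ℕ) : ℂ)

theorem wv_vecMul (ℓ : ℕ) : (wv ℓ) ᵥ* (B0C ℓ) = -(e1 ℓ) := by
  funext j
  obtain ⟨j, hj⟩ := j
  have h1 : ((wv ℓ) ᵥ* (B0C ℓ)) ⟨j, hj⟩ = ∑ i ∈ Finset.range ℓ,
      ((ℓ : ℂ) - (i : ℂ)) * (if i = j then (if i = 0 then -1 else -2)
        else if i + 1 = j ∨ j + 1 = i then 1 else 0) := by
    rw [← Fin.sum_univ_eq_sum_range (fun i : ℕ => ((ℓ : ℂ) - (i : ℂ)) *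
      (if i = j then (if i = 0 then -1 else -2)
        else if i + 1 = j ∨ j + 1 = i then 1 else 0))]
    simp [Matrix.vecMul, dotProduct, wv, B0C, Fin.ext_iff]
  have h2 : ∀ i : ℕ, ((ℓ : ℂ) - (i : ℂ)) * (if i = j then (if i = 0 then -1 else -2)
        else if i + 1 = j ∨ j + 1 = i then 1 else 0) =
      (if i = j then ((ℓ : ℂ) - (i : ℂ)) * (if i = 0 then -1 else -2) else 0)
      + (if i = j + 1 then ((ℓ : ℂ) - (i : ℂ)) else 0)
      + (if i = j - 1 then (if j = 0 then 0 else ((ℓ : ℂ) - (i : ℂ))) else 0) := by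
    intro i
    rcases Nat.eq_zero_or_pos j with h0 | h0
    · subst h0
      rcases i with _ | _ | i <;> simp
    · by_cases h3 : i = j
      · simp [h3, show j ≠ j - 1 by omega]
      · by_cases h4 : i = j + 1
        · simp [h4, show j + 1 ≠ j - 1 by omega]
        · by_cases h5 : i = j - 1
          · simp [h3, h4, show i + 1 = j by omega, h5, show j - 1 ≠ j by omega,
              show j ≠ 0 by omega, show j - 1 + 1 = j by omega,
              show j - 1 ≠ j + 1 by omega]
          · simp [h3, h4, h5, show i + 1 ≠ j by omega, show j + 1 ≠ i by omega]
  rw [h1, Finset.sum_congr rfl (fun i _ => h2 i), Finset.sum_add_distrib,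
    Finset.sum_add_distrib, Finset.sum_ite_eq', Finset.sum_ite_eq', Finset.sum_ite_eq']
  have h6 : (if j + 1 ∈ Finset.range ℓ then (ℓ : ℂ) - ((j + 1 : ℕ) : ℂ) else 0)
      = (ℓ : ℂ) - (j + 1) := by
    split_ifs with h
    · push_cast; ring
    · have : ℓ = j + 1 := by rw [Finset.mem_range] at h; omega
      rw [this]; push_cast; ring
  rw [h6, if_pos (Finset.mem_range.2 hj), if_pos (Finset.mem_range.2 (by omega))]
  rcases j with _ | j
  · simp [e1]; ring
  · simp [e1]; ring

theorem sum_geom_w (ℓ : ℕ) (a : ℂ) :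
    ∑ i ∈ Finset.range ℓ, ((ℓ : ℂ) - (i : ℂ)) * a ^ i = - z1 ℓ a := by
  have hs : ∀ n : ℕ, ∑ i ∈ Finset.range (n + 1), (((n + 1 : ℕ) : ℂ) - (i : ℂ)) * a ^ i
      = ∑ i ∈ Finset.range n, ((n : ℂ) - (i : ℂ)) * a ^ i
        + ∑ i ∈ Finset.range (n + 1), a ^ i := by
    intro n
    rw [Finset.sum_range_succ, Finset.sum_range_succ _ n, ← add_assoc,
      ← Finset.sum_add_distrib]
    congr 1
    · apply Finset.sum_congr rfl
      intro i _
      push_cast; ring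
    · push_cast; ring
  induction ℓ with
  | zero => simp [z1]
  | succ n ih =>
    rw [hs, ih]
    by_cases h : a = 1
    · simp [z1, h]; ring
    · have h' : a - 1 ≠ 0 := sub_ne_zero.2 h
      rw [geom_sum_eq h]
      simp only [z1, h, if_false]
      field_simp
      push_cast
      ring

theorem sum_lin_w (ℓ : ℕ) (f : ℂ) :
    ∑ i ∈ Finset.range ℓ, ((ℓ : ℂ) - (i : ℂ)) * (1 - f * i)
      = (ℓ : ℂ) * (ℓ + 1) / 6 * (3 - f * (ℓ - 1)) := by
  have gen : ∀ (c : ℂ) (n : ℕ), ∑ i ∈ Finset.range n, (c - (i : ℂ)) * (1 - f * i)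
      = c * n - (1 + c * f) * (n * (n - 1) / 2) + f * (n * (n - 1) * (2 * n - 1) / 6) := by
    intro c n
    induction n with
    | zero => simp
    | succ n ih => rw [Finset.sum_range_succ, ih]; push_cast; ring
  rw [gen]; ring

theorem den_ne (ℓ : ℕ) (a : ℂ) (ha : ‖a‖ = 1) : (1 : ℂ) - ℓ * (-1 + a⁻¹) ≠ 0 := by
  intro h
  have h1 : ((ℓ + 1 : ℕ) : ℂ) = ℓ * a⁻¹ := by push_cast; linear_combination h
  have h2 := congrArg norm h1
  rw [norm_mul, norm_inv, ha, Complex.norm_natCast, Complex.norm_natCast] at h2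
  push_cast at h2
  linarith

theorem fd_ellx1_first_order (ℓ : ℕ) (hℓ : 0 < ℓ) (ω₁ ω₂ : ℝ) (a f s0 : ℂ)
    (ha : a = Complex.exp (Complex.I * ω₁)) (hf : f = -1 + a⁻¹)
    (hs0 : s0 = a ^ ℓ / (1 - ℓ * f))
    (β₀ β₁ : Fin ℓ → ℂ)
    (hβ₀ : ∀ j : Fin ℓ, β₀ j = s0 * ((1 + f) - f * ((j : ℕ) + 1 : ℂ)))
    (hβ₁ : (B0C ℓ + f • Matrix.vecMulVec (e1 ℓ) (e1 ℓ)).mulVec β₁ =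
      (-(Complex.exp (Complex.I * ω₂))) • D1 ℓ a -
        (Complex.exp (-(Complex.I * ω₂)) • Matrix.vecMulVec (D1 ℓ a) (e1 ℓ)
          - (2 : ℂ) • (1 : Matrix (Fin ℓ) (Fin ℓ) ℂ)).mulVec β₀) :
    β₁ ⟨0, hℓ⟩ = -(a ^ (-(ℓ : ℤ))) * s0 *
      ((1 / 3 : ℂ) * ℓ * (ℓ + 1) * (3 * a⁻¹ + (1 - a⁻¹) * (ℓ + 2)) * s0
        + (Complex.exp (Complex.I * ω₂) + s0 * Complex.exp (-(Complex.I * ω₂)))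
            * z1 ℓ a) := by
  have hna : ‖a‖ = 1 := by
    rw [ha, mul_comm]; exact Complex.norm_exp_ofReal_mul_I ω₁
  have ha0 : a ≠ 0 := by rw [ha]; exact Complex.exp_ne_zero _
  have hd : (1 : ℂ) - ℓ * f ≠ 0 := by rw [hf]; exact den_ne ℓ a hna
  generalize Complex.exp (Complex.I * ω₂) = p at *
  generalize Complex.exp (-(Complex.I * ω₂)) = q at *
  have he : ∀ v : Fin ℓ → ℂ, e1 ℓ ⬝ᵥ v = v ⟨0, hℓ⟩ := by
    intro v
    rw [dotProduct, Finset.sum_eq_single ⟨0, hℓ⟩]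
    · simp [e1]
    · intro b _ hb
      have : (b : ℕ) ≠ 0 := fun h => hb (Fin.ext h)
      simp [e1, this]
    · simp
  have hwe : wv ℓ ⬝ᵥ e1 ℓ = ℓ := by
    rw [dotProduct_comm, he]; simp [wv]
  have hwD : wv ℓ ⬝ᵥ D1 ℓ a = - z1 ℓ a := by
    rw [← sum_geom_w, ← Fin.sum_univ_eq_sum_range
      (fun i : ℕ => ((ℓ : ℂ) - (i : ℂ)) * a ^ i)]
    rfl
  have hwb : wv ℓ ⬝ᵥ β₀ = s0 * ((ℓ : ℂ) * (ℓ + 1) / 6 * (3 - f * (ℓ - 1))) := by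
    rw [← sum_lin_w, ← Fin.sum_univ_eq_sum_range
      (fun i : ℕ => ((ℓ : ℂ) - (i : ℂ)) * (1 - f * i)), dotProduct, Finset.mul_sum]
    apply Finset.sum_congr rfl
    intro i _
    rw [hβ₀]; simp only [wv]; ring
  have hb0 : β₀ ⟨0, hℓ⟩ = s0 := by rw [hβ₀]; simp
  have key := congrArg (fun v => wv ℓ ⬝ᵥ v) hβ₁
  simp only [Matrix.add_mulVec, Matrix.sub_mulVec, Matrix.smul_mulVec, Matrix.one_mulVec,
    dotProduct_add, dotProduct_sub, dotProduct_smul, Matrix.dotProduct_mulVec, wv_vecMul,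
    Matrix.vecMul_vecMulVec, neg_dotProduct, smul_dotProduct, he, hwe, hwD, hwb, hb0,
    smul_eq_mul] at key
  have hs : a ^ (-(ℓ : ℤ)) * s0 = (1 - ℓ * f)⁻¹ := by
    rw [hs0, _root_.zpow_neg, _root_.zpow_natCast]
    field_simp
  have hi : a⁻¹ = f + 1 := by rw [hf]; ring
  rw [neg_mul, hs, hi]
  field_simp
  linear_combination -3 * key
end

section
/- Let ℓ ≥ 1 be an integer and ω₁, ω₂ ∈ ℝ. Set a = exp(i ω₁), f = −1 + a⁻¹, and δ₀ = (1/2)·exp(−i ω₂)·(cos ω₁ − 1), and let δ̄₀ = (1/2)·exp(i ω₂)·(cos ω₁ − 1) denote its complex conjugate. Assume 1 + ℓ − ℓ·a⁻¹ + δ₀·z₁(a) ≠ 0. Then every β₀ ∈ ℂ^ℓ satisfying (B₀ + (f·e₁ + δ₀·D𝟙)·e₁ᵀ) β₀ = −(δ̄₀·D𝟙 + a^ℓ·e_ℓ) has first entry (β₀)₁ = (a^ℓ − δ̄₀·z₁(a)) / (1 + ℓ − ℓ·a⁻¹ + δ₀·z₁(a)). -/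
open Matrix Complex

/-- The weights `ℓ - i` satisfy `wᵀ B₀ = -e₁ᵀ`. -/
lemma weights_vecMul (ℓ : ℕ) (j : Fin ℓ) :
    ∑ i : Fin ℓ, ((ℓ : ℂ) - (i : ℕ)) * B0C ℓ i j = -e1 ℓ j := by
  obtain ⟨j, hj⟩ := j
  have h1 : ∀ i : Fin ℓ, ((ℓ : ℂ) - (i : ℕ)) * B0C ℓ i ⟨j, hj⟩ =
      (fun i : ℕ => (if i = j then ((ℓ : ℂ) - i) * (if j = 0 then -1 else -2) else 0)
        + (if i + 1 = j then ((ℓ : ℂ) - i) else 0)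
        + (if i = j + 1 then ((ℓ : ℂ) - i) else 0)) (i : ℕ) := by
    intro i
    simp only [B0C, Fin.ext_iff]
    by_cases h : (i : ℕ) = j
    · simp [h]
    · by_cases h2 : (i : ℕ) + 1 = j
      · have h3 : (i : ℕ) ≠ j + 1 := by omega
        simp [h, h2, h3]
      · by_cases h3 : (i : ℕ) = j + 1
        · simp [h3]
          omega
        · have h4 : j + 1 ≠ (i : ℕ) := fun h => h3 h.symm
          simp [h, h2, h3, h4]
  rw [Finset.sum_congr rfl (fun i _ => h1 i), Fin.sum_univ_eq_sum_range
      (fun i : ℕ => (if i = j then ((ℓ : ℂ) - i) * (if j = 0 then -1 else -2) else 0)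
        + (if i + 1 = j then ((ℓ : ℂ) - i) else 0)
        + (if i = j + 1 then ((ℓ : ℂ) - i) else 0)),
    Finset.sum_add_distrib, Finset.sum_add_distrib]
  have hlast : ∑ i ∈ Finset.range ℓ, (if i = j + 1 then ((ℓ : ℂ) - i) else 0)
      = (ℓ : ℂ) - (j + 1) := by
    rw [Finset.sum_ite_eq']
    split_ifs with h
    · push_cast; ring
    · have : ℓ = j + 1 := by simp at h; omega
      rw [this]; push_cast; ring
  rw [hlast, Finset.sum_ite_eq', if_pos (Finset.mem_range.2 hj)]
  rcases j with _ | k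
  · simp [e1]
    ring
  · simp only [Nat.add_right_cancel_iff]
    rw [Finset.sum_ite_eq', if_pos (Finset.mem_range.2 (by omega))]
    simp [e1]
    ring

lemma weights_geom (a : ℂ) (ℓ : ℕ) :
    ((∑ i ∈ Finset.range ℓ, ((ℓ : ℂ) - i) * a ^ i) = - z1 ℓ a) := by
  have hs : ∀ n : ℕ, (∑ i ∈ Finset.range (n + 1), (((n + 1 : ℕ) : ℂ) - i) * a ^ i)
      = (∑ i ∈ Finset.range n, ((n : ℂ) - i) * a ^ i)
        + ∑ i ∈ Finset.range (n + 1), a ^ i := by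
    intro n
    rw [Finset.sum_range_succ, Finset.sum_range_succ (fun i => a ^ i), ← add_assoc,
      ← Finset.sum_add_distrib]
    congr 1
    · refine Finset.sum_congr rfl fun i _ => ?_
      push_cast; ring
    · push_cast; ring
  induction ℓ with
  | zero => simp [z1]
  | succ n ih =>
    rw [hs, ih]
    unfold z1
    split_ifs with h
    · subst h
      simp
      ring
    · have h' : a - 1 ≠ 0 := sub_ne_zero.2 h
      rw [geom_sum_eq h]
      push_cast
      field_simp
      ring

theorem fe_ellx1_zeroth_order (ℓ : ℕ) (hℓ : 0 < ℓ) (ω₁ ω₂ : ℝ) (a f δ₀ δbar₀ : ℂ)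
    (ha : a = Complex.exp (Complex.I * ω₁)) (hf : f = -1 + a⁻¹)
    (hδ₀ : δ₀ = (1 / 2 : ℂ) * Complex.exp (-(Complex.I * ω₂)) * (Real.cos ω₁ - 1))
    (hδbar₀ : δbar₀ = (1 / 2 : ℂ) * Complex.exp (Complex.I * ω₂) * (Real.cos ω₁ - 1))
    (hden : 1 + ℓ - ℓ * a⁻¹ + δ₀ * z1 ℓ a ≠ 0)
    (β₀ : Fin ℓ → ℂ)
    (hβ₀ : (B0C ℓ + Matrix.vecMulVec (f • e1 ℓ + δ₀ • D1 ℓ a) (e1 ℓ)).mulVec β₀ =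
      -(δbar₀ • D1 ℓ a + (a ^ ℓ) • eL ℓ)) :
    β₀ ⟨0, hℓ⟩ = (a ^ ℓ - δbar₀ * z1 ℓ a) / (1 + ℓ - ℓ * a⁻¹ + δ₀ * z1 ℓ a) := by
  have hS : ∑ i : Fin ℓ, ((ℓ : ℂ) - (i : ℕ)) * a ^ (i : ℕ) = - z1 ℓ a := by
    rw [← weights_geom, Fin.sum_univ_eq_sum_range (fun i : ℕ => ((ℓ : ℂ) - i) * a ^ i)]
  have hE : ∑ i : Fin ℓ, ((ℓ : ℂ) - (i : ℕ)) * e1 ℓ i = ℓ := by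
    rw [Finset.sum_eq_single (⟨0, hℓ⟩ : Fin ℓ)]
    · simp [e1]
    · intro b _ hb
      have : (b : ℕ) ≠ 0 := fun h => hb (Fin.ext h)
      simp [e1, this]
    · simp
  have hL : ∑ i : Fin ℓ, ((ℓ : ℂ) - (i : ℕ)) * eL ℓ i = 1 := by
    rw [Finset.sum_eq_single (⟨ℓ - 1, by omega⟩ : Fin ℓ)]
    · simp [eL, Nat.cast_sub (show 1 ≤ ℓ from hℓ)]
    · intro b _ hb
      have : (b : ℕ) ≠ ℓ - 1 := fun h => hb (Fin.ext h)
      simp [eL, this]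
    · simp
  have hdot : ∑ j : Fin ℓ, e1 ℓ j * β₀ j = β₀ ⟨0, hℓ⟩ := by
    rw [Finset.sum_eq_single (⟨0, hℓ⟩ : Fin ℓ)]
    · simp [e1]
    · intro b _ hb
      have : (b : ℕ) ≠ 0 := fun h => hb (Fin.ext h)
      simp [e1, this]
    · simp
  have hB : ∑ i : Fin ℓ, ((ℓ : ℂ) - (i : ℕ)) * (∑ j, B0C ℓ i j * β₀ j) = -β₀ ⟨0, hℓ⟩ := by
    simp_rw [Finset.mul_sum]
    rw [Finset.sum_comm]
    simp_rw [← mul_assoc, ← Finset.sum_mul, weights_vecMul, neg_mul]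
    rw [Finset.sum_neg_distrib, hdot]
  have hrow : ∀ i : Fin ℓ, (∑ j, B0C ℓ i j * β₀ j)
      + (f * e1 ℓ i + δ₀ * a ^ (i : ℕ)) * β₀ ⟨0, hℓ⟩
      = -(δbar₀ * a ^ (i : ℕ) + a ^ ℓ * eL ℓ i) := by
    intro i
    have h := congrFun hβ₀ i
    simp only [Matrix.mulVec, dotProduct, Matrix.add_apply, Matrix.vecMulVec_apply,
      Pi.add_apply, Pi.neg_apply, Pi.smul_apply, smul_eq_mul, D1, add_mul (B0C _ _ _),
      Finset.sum_add_distrib, mul_assoc (_ + _), ← Finset.mul_sum, hdot] at h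
    exact h
  have key : -β₀ ⟨0, hℓ⟩ + (f * ℓ + δ₀ * (-z1 ℓ a)) * β₀ ⟨0, hℓ⟩
      = -(δbar₀ * (-z1 ℓ a) + a ^ ℓ * 1) := by
    rw [← hB, ← hS, ← hL]
    nth_rewrite 2 [← hE]
    simp only [Finset.mul_sum (a := f), Finset.mul_sum (a := δ₀), Finset.mul_sum (a := δbar₀),
      Finset.mul_sum (a := a ^ ℓ), ← Finset.sum_add_distrib, Finset.sum_mul,
      ← Finset.sum_neg_distrib]
    refine Finset.sum_congr rfl fun i _ => ?_
    linear_combination ((ℓ : ℂ) - (i : ℕ)) * hrow i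
  rw [eq_div_iff hden]
  rw [hf] at key
  linear_combination -key
end

section
/- Let ℓ ≥ 1 be an integer and ω₂ ∈ ℝ. Let B̌ be the ℓ×ℓ complex tridiagonal matrix with (B̌)_{1,1} = 5, (B̌)_{j,j} = 4 for 2 ≤ j ≤ ℓ, (B̌)_{j,j+1} = (B̌)_{j+1,j} = 1 for 1 ≤ j ≤ ℓ−1, and all other entries 0, and define ℬ₁ = −(1/3)·(B̌ − 3·exp(−i ω₂)·𝟙·e₁ᵀ) and b₁ = (1/3)·(−3·exp(−i ω₂)·𝟙 + e_ℓ). Then: (a) B₀·𝟙 = −e_ℓ (so β₀ = 𝟙 solves (2/3)·B₀·β₀ = −(2/3)·e_ℓ); (b) b₁ − ℬ₁·𝟙 = 2·(1 − exp(−i ω₂))·𝟙; and (c) every β₁ ∈ ℂ^ℓ satisfying (2/3)·B₀·β₁ = 2·(1 − exp(−i ω₂))·𝟙 has first entry (β₁)₁ = −(3/2)·ℓ(ℓ+1)·(1 − exp(−i ω₂)). -/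
open Matrix Complex

/-- The ℓ×ℓ complex tridiagonal matrix B̌ with (B̌)₁₁ = 5, other diagonal
entries 4, and super/sub-diagonal entries 1. -/
def Bcheck (ℓ : ℕ) : Matrix (Fin ℓ) (Fin ℓ) ℂ := fun i j =>
  if i = j then (if (i : ℕ) = 0 then 5 else 4)
  else if (i : ℕ) + 1 = (j : ℕ) ∨ (j : ℕ) + 1 = (i : ℕ) then 1 else 0

/-- The all-ones vector 𝟙 of ℂ^ℓ. -/
def ones (ℓ : ℕ) : Fin ℓ → ℂ := fun _ => 1

/-- Extension of a vector by zero to all natural indices. -/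
def extZ {ℓ : ℕ} (v : Fin ℓ → ℂ) : ℕ → ℂ := fun k => if h : k < ℓ then v ⟨k, h⟩ else 0

theorem tri_row {ℓ : ℕ} (v : Fin ℓ → ℂ) (a b : ℂ) (i : Fin ℓ) :
    (∑ j : Fin ℓ, (if i = j then (if (i : ℕ) = 0 then a else b)
      else if (i : ℕ) + 1 = (j : ℕ) ∨ (j : ℕ) + 1 = (i : ℕ) then 1 else 0) * v j)
    = (if (i : ℕ) = 0 then a else b) * extZ v i + extZ v (i + 1)
      + (if (i : ℕ) = 0 then 0 else extZ v (i - 1)) := by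
  have key : ∀ k : ℕ, ∑ j : Fin ℓ, (if (j : ℕ) = k then v j else 0) = extZ v k := by
    intro k
    unfold extZ
    split_ifs with h
    · rw [Finset.sum_eq_single ⟨k, h⟩]
      · simp
      · intro j _ hj
        rw [if_neg]
        intro hh
        exact hj (Fin.ext hh)
      · simp
    · apply Finset.sum_eq_zero
      intro j _
      rw [if_neg]
      have := j.2
      omega
  have h0 : (if (i : ℕ) = 0 then 0 else extZ v (i - 1))
      = ∑ j : Fin ℓ, (if (i : ℕ) = 0 then 0 else if (j : ℕ) = (i : ℕ) - 1 then v j else 0) := by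
    split_ifs
    · simp
    · rw [key]
  rw [h0, ← key i, ← key (i + 1), Finset.mul_sum, ← Finset.sum_add_distrib,
    ← Finset.sum_add_distrib]
  apply Finset.sum_congr rfl
  intro j _
  simp only [Fin.ext_iff]
  split_ifs <;> first | omega | ring

theorem fe_ellx1_first_order_omega1_zero (ℓ : ℕ) (hℓ : 0 < ℓ) (ω₂ : ℝ) :
    (B0C ℓ).mulVec (ones ℓ) = -(eL ℓ) ∧
    ((1 / 3 : ℂ) • ((-(3 * Complex.exp (-(Complex.I * ω₂)))) • ones ℓ + eL ℓ)
      - ((-(1 / 3 : ℂ)) • (Bcheck ℓ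
          - (3 * Complex.exp (-(Complex.I * ω₂))) •
              Matrix.vecMulVec (ones ℓ) (e1 ℓ))).mulVec (ones ℓ)
      = fun _ => 2 * (1 - Complex.exp (-(Complex.I * ω₂)))) ∧
    ∀ β₁ : Fin ℓ → ℂ,
      ((2 / 3 : ℂ) • B0C ℓ).mulVec β₁ =
        (fun _ => 2 * (1 - Complex.exp (-(Complex.I * ω₂)))) →
      β₁ ⟨0, hℓ⟩ = -(3 / 2 : ℂ) * ℓ * (ℓ + 1)
        * (1 - Complex.exp (-(Complex.I * ω₂))) := by
  have hone : ∀ k : ℕ, extZ (ones ℓ) k = if k < ℓ then 1 else 0 := by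
    intro k
    simp [extZ, ones]
  refine ⟨?_, ?_, ?_⟩
  · funext i
    have hi := i.2
    have h := tri_row (ones ℓ) (-1) (-2) i
    simp only [Matrix.mulVec, dotProduct, B0C, Pi.neg_apply, eL]
    rw [h, hone, hone, hone]
    split_ifs <;> first | omega | norm_num
  · funext i
    have hi := i.2
    have h : (Bcheck ℓ).mulVec (ones ℓ) i = _ := tri_row (ones ℓ) 5 4 i
    have h1 : (Matrix.vecMulVec (ones ℓ) (e1 ℓ)).mulVec (ones ℓ) i = 1 := by
      simp only [Matrix.mulVec, dotProduct, Matrix.vecMulVec_apply, ones, e1, one_mul, mul_one]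
      rw [Finset.sum_eq_single ⟨0, hℓ⟩]
      · simp
      · intro j _ hj
        rw [if_neg]
        intro hh
        exact hj (Fin.ext hh)
      · simp
    rw [hone, hone, hone] at h
    simp only [Matrix.smul_mulVec, Matrix.sub_mulVec, Pi.sub_apply, Pi.smul_apply, Pi.add_apply,
      smul_eq_mul, h, h1]
    simp only [ones, eL]
    split_ifs <;> first | omega | ring
  · intro β h
    set c : ℂ := 1 - Complex.exp (-(Complex.I * ω₂)) with hc
    have row : ∀ k : ℕ, k < ℓ → (if k = 0 then (-1 : ℂ) else -2) * extZ β k + extZ β (k + 1)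
        + (if k = 0 then 0 else extZ β (k - 1)) = 3 * c := by
      intro k hk
      have h1 := congrFun h ⟨k, hk⟩
      have h2 : (B0C ℓ).mulVec β ⟨k, hk⟩ = _ := tri_row β (-1) (-2) ⟨k, hk⟩
      simp only [Matrix.smul_mulVec, Pi.smul_apply, smul_eq_mul, h2] at h1
      linear_combination (3 / 2 : ℂ) * h1
    have step : ∀ k : ℕ, k < ℓ → extZ β (k + 1) - extZ β k = 3 * c * (k + 1) := by
      intro k
      induction k with
      | zero =>
        intro hk
        have := row 0 hk
        simp only [if_true] at this
        push_cast
        linear_combination this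
      | succ n ih =>
        intro hk
        have h1 := row (n + 1) hk
        have h2 := ih (by omega)
        simp only [Nat.add_eq_zero_iff, one_ne_zero, and_false, if_false,
          Nat.add_sub_cancel] at h1
        push_cast
        linear_combination h1 + h2
    have clos : ∀ k : ℕ, k ≤ ℓ → extZ β k = extZ β 0 + 3 * c * (k * (k + 1) / 2) := by
      intro k
      induction k with
      | zero => intro _; simp
      | succ n ih =>
        intro hk
        have h1 := step n hk
        have h2 := ih (by omega)
        push_cast
        linear_combination h1 + h2
    have h1 := clos ℓ le_rfl
    have h2 : extZ β ℓ = 0 := by simp [extZ]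
    have h3 : extZ β 0 = β ⟨0, hℓ⟩ := by simp [extZ, hℓ]
    rw [h2, h3] at h1
    linear_combination -h1
end
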